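/- arXiv:math/0609706 — 3 statements merged into one kernel-verified Lean document; each statement's English description precedes it below -/
import Mathlib

section
/- Let h : ℂ⁵ → ℂ and φ : ℂ⁵ → ℂ² be ℂ-Fréchet differentiable at a point z ∈ ℂ⁵ with h(z) ≠ 0, and define Φ : ℂ⁵ → ℂ² × ℂ × ℂ⁵ ≅ ℂ⁸ by Φ(ζ) = (φ(ζ), h(ζ), h(ζ)·ζ). Then Φ is differentiable at z and its derivative DΦ(z) : ℂ⁵ → ℂ⁸ is an injective linear map (Φ is of maximal rank, i.e. immersive, at z). -/
/-- At any point `z` where `h(z) ≠ 0` and `h`, `φ` are ℂ-differentiable, the map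
`Φ(ζ) = (φ(ζ), h(ζ), h(ζ)·ζ)` is differentiable with injective derivative (immersive). -/
theorem stmt_5 (h : (Fin 5 → ℂ) → ℂ) (φ : (Fin 5 → ℂ) → (Fin 2 → ℂ))
    (z : Fin 5 → ℂ)
    (hh : DifferentiableAt ℂ h z) (hφ : DifferentiableAt ℂ φ z)
    (hz : h z ≠ 0) :
    DifferentiableAt ℂ (fun ζ : Fin 5 → ℂ => (φ ζ, h ζ, h ζ • ζ)) z ∧
      Function.Injective
        (fderiv ℂ (fun ζ : Fin 5 → ℂ => (φ ζ, h ζ, h ζ • ζ)) z) := by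
  have hD := hφ.hasFDerivAt.prodMk
    (hh.hasFDerivAt.prodMk (hh.hasFDerivAt.smul (hasFDerivAt_id z)))
  refine ⟨hD.differentiableAt, ?_⟩
  have hE : fderiv ℂ (fun ζ : Fin 5 → ℂ => (φ ζ, h ζ, h ζ • ζ)) z = _ := hD.fderiv
  rw [hE, injective_iff_map_eq_zero]
  intro v hv
  -- The last two components are `Dh(z) v` and `h(z) v + (Dh(z) v) z`, so if both vanish
  -- then `h(z) v = 0`.
  have h1 : fderiv ℂ h z v = 0 := congrArg (fun p => p.2.1) hv
  have h2 : h z • v + fderiv ℂ h z v • z = 0 := congrArg (fun p => p.2.2) hv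
  rw [h1, zero_smul, add_zero] at h2
  exact (smul_eq_zero.mp h2).resolve_left hz
end

section
/- Let E be a complex Banach space, let 0 < r' < r, and let 0 ≤ δ < r − r'. If g : E → E is holomorphic (ℂ-Fréchet differentiable) on the open ball B(0, r) = {t ∈ E : ‖t‖ < r} and satisfies ‖g(t) − t‖ ≤ δ for all t ∈ B(0, r), then g is injective on the smaller ball B(0, r'). -/
/-!
The displacement `h = g - id` is holomorphic and bounded by `δ` on the ball of radius `r`. Around
every point of the ball of radius `r'` there is room `r - r'`, so Cauchy's estimate on complex
lines bounds its derivative there by `δ / (r - r') < 1` (`norm_fderiv_le_of_norm_le_ball`). By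
convexity and the mean value inequality, `h` is a strict contraction on the smaller ball. If
`g x = g y`, then `‖h x - h y‖ = ‖x - y‖`, which forces `x = y`.
-/

/-- Cauchy's estimate for the Fréchet derivative at `c`, obtained by restricting `h` to the complex
lines through `c`. The strict bound `‖c‖ + ρ < r` keeps the closed discs of radius `ρ` inside the
domain of holomorphy. -/
theorem norm_fderiv_le_of_norm_le_ball {E F : Type*} [NormedAddCommGroup E] [NormedSpace ℂ E]
    [NormedAddCommGroup F] [NormedSpace ℂ F] {r ρ δ : ℝ} (hρ : 0 < ρ) (hδ : 0 ≤ δ) {h : E → F}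
    (hd : DifferentiableOn ℂ h (Metric.ball (0 : E) r))
    (hb : ∀ t ∈ Metric.ball (0 : E) r, ‖h t‖ ≤ δ) {c : E} (hc : ‖c‖ + ρ < r) :
    ‖fderiv ℂ h c‖ ≤ δ / ρ := by
  refine ContinuousLinearMap.opNorm_le_bound _ (by positivity) fun v => ?_
  rcases eq_or_ne v 0 with rfl | hv
  · simp
  have hv' : 0 < ‖v‖ := norm_pos_iff.2 hv
  have hmem : ∀ ζ ∈ Metric.closedBall (0 : ℂ) (ρ / ‖v‖),
      c + ζ • v ∈ Metric.ball (0 : E) r := by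
    intro ζ hζ
    rw [mem_closedBall_zero_iff, le_div_iff₀ hv'] at hζ
    rw [mem_ball_zero_iff]
    calc ‖c + ζ • v‖ ≤ ‖c‖ + ‖ζ • v‖ := norm_add_le _ _
      _ = ‖c‖ + ‖ζ‖ * ‖v‖ := by rw [norm_smul]
      _ < r := by linarith
  have hdiff : ∀ ζ ∈ Metric.closedBall (0 : ℂ) (ρ / ‖v‖),
      DifferentiableAt ℂ (fun ζ : ℂ => h (c + ζ • v)) ζ := by
    intro ζ hζ
    have h1 : DifferentiableAt ℂ h (c + ζ • v) :=
      hd.differentiableAt (Metric.isOpen_ball.mem_nhds (hmem ζ hζ))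
    exact h1.comp ζ (f := fun ζ : ℂ => c + ζ • v) (by fun_prop)
  have hcauchy : ‖deriv (fun ζ : ℂ => h (c + ζ • v)) 0‖ ≤ δ / (ρ / ‖v‖) := by
    refine Complex.norm_deriv_le_of_forall_mem_sphere_norm_le (by positivity) ?_ fun ζ hζ =>
      hb _ (hmem ζ (Metric.sphere_subset_closedBall hζ))
    refine DifferentiableOn.diffContOnCl fun ζ hζ => (hdiff ζ ?_).differentiableWithinAt
    exact Metric.closure_ball_subset_closedBall hζ
  have hderiv : deriv (fun ζ : ℂ => h (c + ζ • v)) 0 = fderiv ℂ h c v := by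
    have hc0 : DifferentiableAt ℂ h c :=
      hd.differentiableAt (Metric.isOpen_ball.mem_nhds (by
        rw [mem_ball_zero_iff]; linarith))
    exact (hc0.hasFDerivAt.hasLineDerivAt v).deriv
  rw [hderiv] at hcauchy
  exact hcauchy.trans_eq (by field_simp)

/-- A holomorphic self-map of a ball in a complex Banach space which is uniformly
`δ`-close to the identity, with `δ < r - r'`, is injective on the smaller ball of
radius `r'`. -/
theorem stmt_6 {E : Type*} [NormedAddCommGroup E] [NormedSpace ℂ E] [CompleteSpace E]
    (r r' δ : ℝ) (hr' : 0 < r') (hr : r' < r) (hδ0 : 0 ≤ δ) (hδ : δ < r - r')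
    (g : E → E) (hg : DifferentiableOn ℂ g (Metric.ball (0 : E) r))
    (hclose : ∀ t ∈ Metric.ball (0 : E) r, ‖g t - t‖ ≤ δ) :
    Set.InjOn g (Metric.ball (0 : E) r') := by
  intro x hx y hy hxy
  have hd : DifferentiableOn ℂ (fun t => g t - t) (Metric.ball (0 : E) r) :=
    hg.sub differentiableOn_id
  have hmv : ‖(g y - y) - (g x - x)‖ ≤ δ / (r - r') * ‖y - x‖ := by
    refine Convex.norm_image_sub_le_of_norm_fderiv_le (𝕜 := ℂ) (f := fun t => g t - t)
      (fun z hz => hd.differentiableAt (Metric.isOpen_ball.mem_nhds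
        (Metric.ball_subset_ball hr.le hz))) (fun z hz => ?_) (convex_ball (0 : E) r') hx hy
    refine norm_fderiv_le_of_norm_le_ball (by linarith) hδ0 hd hclose ?_
    rw [mem_ball_zero_iff] at hz
    linarith
  have heq : (g y - y) - (g x - x) = -(y - x) := by rw [hxy]; abel
  rw [heq, norm_neg] at hmv
  have hlt : δ / (r - r') < 1 := (div_lt_one (by linarith)).2 hδ
  have h0 : ‖y - x‖ = 0 := by nlinarith [norm_nonneg (y - x)]
  exact (sub_eq_zero.1 (norm_eq_zero.1 h0)).symm
end

section
/- Let X be a locally compact Hausdorff topological space, W ⊆ X an open set, and K ⊆ W a compact set. Let τ : X → ℝ and ρ : X → ℝ be continuous on W, with τ(x) ≥ 0 for all x ∈ W and {x ∈ W : τ(x) = 0} = K. Then there exist ε > 0 and an open set Ω with K ⊆ Ω, the closure of Ω compact and contained in W, and τ(x) < ε for all x ∈ Ω, such that the function φ(x) = ρ(x) + 1/(ε − τ(x)) is an exhaustion function on Ω: for every c ∈ ℝ the sublevel set {x ∈ Ω : φ(x) ≤ c} is compact. -/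
/-! Take an open `V ⊇ K` with compact closure in `W`. On the compact boundary `closure V \ V`
the function `τ` is positive, hence at least some `ε > 0`; put `Ω = V ∩ {τ < ε}`. Since `ρ` is
bounded below on `closure V`, the bound `ρ + 1/(ε - τ) ≤ c` keeps `ε - τ` above a constant
`1/M > 0`. The sublevel set is therefore cut out inside the compact set
`closure V ∩ {τ ≤ ε - 1/M}`, on which `ρ + 1/(ε - τ)` is continuous, so it is compact. -/

/-- If `τ ≥ 0` is continuous on an open set `W` of a locally compact Hausdorff space and
vanishes exactly on a compact set `K ⊆ W`, and `ρ` is continuous on `W`, then for some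
small `ε > 0` and some open `Ω ⊇ K` with compact closure in `W` on which `τ < ε`, the
function `ρ + 1/(ε - τ)` is an exhaustion function on `Ω`. -/
theorem stmt_8 {X : Type*} [TopologicalSpace X] [LocallyCompactSpace X] [T2Space X]
    (W : Set X) (hW : IsOpen W) (K : Set X) (hK : IsCompact K) (hKW : K ⊆ W)
    (τ ρ : X → ℝ) (hτ : ContinuousOn τ W) (hρ : ContinuousOn ρ W)
    (hτ0 : ∀ x ∈ W, 0 ≤ τ x) (hτK : {x ∈ W | τ x = 0} = K) :
    ∃ ε > (0 : ℝ), ∃ Ω : Set X, IsOpen Ω ∧ K ⊆ Ω ∧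
      IsCompact (closure Ω) ∧ closure Ω ⊆ W ∧ (∀ x ∈ Ω, τ x < ε) ∧
      ∀ c : ℝ, IsCompact {x ∈ Ω | ρ x + 1 / (ε - τ x) ≤ c} := by
  obtain ⟨V, hV, hKV, hVW, hVc⟩ := exists_open_between_and_isCompact_closure hK hW hKW
  have hpos : ∀ x ∈ closure V \ V, 0 < τ x := fun x hx =>
    lt_of_le_of_ne (hτ0 x (hVW hx.1)) fun h =>
      hx.2 (hKV (hτK ▸ ⟨hVW hx.1, h.symm⟩))
  obtain ⟨ε, hε, hεB⟩ := (hVc.diff hV).exists_forall_le'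
    (hτ.mono (Set.sdiff_subset.trans hVW)) hpos
  have hsub : closure (V ∩ τ ⁻¹' Set.Iio ε) ⊆ closure V := closure_mono Set.inter_subset_left
  refine ⟨ε, hε, V ∩ τ ⁻¹' Set.Iio ε,
    (hτ.mono (subset_closure.trans hVW)).isOpen_inter_preimage hV isOpen_Iio, ?_,
    hVc.of_isClosed_subset isClosed_closure hsub, hsub.trans hVW, fun x hx => hx.2, ?_⟩
  · intro x hx
    have h0 : τ x = 0 := (hτK.symm ▸ hx : x ∈ {x ∈ W | τ x = 0}).2
    exact ⟨hKV hx, by simpa [h0] using hε⟩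
  intro c
  obtain ⟨m, hm⟩ := hVc.bddBelow_image (hρ.mono hVW)
  -- The maximum with `1` makes `M` positive even when `c - m` is not.
  set M : ℝ := max (c - m) 1
  have hM : 0 < M := lt_max_of_lt_right one_pos
  have hM' : 0 < 1 / M := one_div_pos.mpr hM
  have hT : IsClosed (closure V ∩ τ ⁻¹' Set.Iic (ε - 1 / M)) :=
    (hτ.mono hVW).preimage_isClosed_of_isClosed isClosed_closure isClosed_Iic
  have hTW : closure V ∩ τ ⁻¹' Set.Iic (ε - 1 / M) ⊆ W := Set.inter_subset_left.trans hVW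
  have hφ : ContinuousOn (fun x => ρ x + 1 / (ε - τ x))
      (closure V ∩ τ ⁻¹' Set.Iic (ε - 1 / M)) := by
    refine (hρ.mono hTW).add (continuousOn_const.div (continuousOn_const.sub (hτ.mono hTW)) ?_)
    rintro x ⟨-, hx⟩
    have hx' : τ x ≤ ε - 1 / M := hx
    linarith
  have hS := hφ.preimage_isClosed_of_isClosed hT (isClosed_Iic (a := c))
  refine hVc.of_isClosed_subset ?_ fun x hx => subset_closure hx.1.1
  convert hS using 1
  ext x
  constructor
  · rintro ⟨⟨hxV, hxε⟩, hxc⟩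
    have hlt : 0 < ε - τ x := sub_pos.mpr hxε
    have hmx : m ≤ ρ x := hm ⟨x, subset_closure hxV, rfl⟩
    have hle : 1 / (ε - τ x) ≤ M := le_trans (by linarith) (le_max_left _ _)
    have hge : 1 / M ≤ ε - τ x := (one_div_le hlt hM).mp hle
    exact ⟨⟨subset_closure hxV, show τ x ≤ ε - 1 / M by linarith⟩, hxc⟩
  · rintro ⟨⟨hxV, hxM⟩, hxc⟩
    have hxM' : τ x ≤ ε - 1 / M := hxM
    have hlt : τ x < ε := by linarith
    -- A point of `closure V` with `τ < ε` is not on the boundary, where `τ ≥ ε`.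
    exact ⟨⟨by_contra fun h => (hεB x ⟨hxV, h⟩).not_gt hlt, hlt⟩, hxc⟩
end
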